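/- (Cut-off estimator.) Suppose p = 1, Assumption 1 holds, the weights satisfy (W1) and (W2), and m = m_n → ∞ with (m*)³/n_* → 0. If for each j ∈ ℤ^q the thresholds satisfy c_n(j) → c(j) as n → ∞ with c(j) < |γ(j)|, then the hard-thresholding (cut-off) estimator σ̂²_{n,c} = ∑_{|j|≤m} w_m(j) γ̂_n(j) 1{|γ̂_n(j)| > c_n(j)} is weakly consistent for σ²: σ̂²_{n,c} → σ² in probability as n → ∞. -/

import Mathlib

/-!
The estimator is compared with `σ² = ∑ γ(j)` in `L¹`, and Markov's inequality concludes.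

**Covariances.** If `|P(A ∩ B) - P(A) P(B)| ≤ φ P(A)` for all events `A` of `X` and `B` of `Y`, then
`Cov(X, Y)² ≤ 4 φ E[X²] E[Y²]` (`cov_sq_le`): for discrete variables this is Cauchy–Schwarz with the
weights `|P(X = a, Y = b) - P(X = a) P(Y = b)|`, and the general case follows by approximation.
For a stationary field `η_i = G(ξ_i, ξ_{i+j})` with `‖j‖ ≤ M` (maximum norm), two sites at distance
`‖k‖` are separated by a slab of width `‖k‖ - M`, whence
`|Cov(η_0, η_k)| ≤ 2 φ(‖k‖ - M)^{1/2} E[η_0²]` (`pairField_cov_le`). Since a sphere of radius `r` in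
`ℤ^q` has `O(r^{q-1})` points, the hypothesis on the mixing rate gives
`∑_k φ(‖k‖ - M)^{1/2} = O(M^q)` (`sum_gap_le`).

**Consequences.** With `G(x, y) = x` the autocovariances are absolutely summable
(`summable_acov1`). With `G(x, y) = xy` the variance of `γ̂_n(j)` is `O((m*)^q / n_*^q)` uniformly
over `|j| ≤ m`, so the `L¹` errors, summed over the `O((m*)^q)` lags of the window, are
`O(((m*)³ / n_*)^{q/2})` and vanish (`tendsto_sum_integral_abs_acovHat1_sub`).

**Thresholding.** Let `I_n(j)` indicate that lag `j` survives. Then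
`σ̂² - σ² = ∑ w I (γ̂ - γ) + ∑ γ (w I - 1) + (∑_{|j| ≤ m} γ - ∑_j γ)`. The first sum is controlled by
the summed `L¹` errors, and the last difference is the tail of a summable family. In the second sum,
`1 - I_n(j) ≤ |γ̂_n(j) - γ(j)| / (|γ(j)| - c_n(j))` as soon as `c_n(j) < |γ(j)|`, so
`E|w I_n(j) - 1| → 0` for each `j`; these means are bounded, and dominated convergence for series
with the majorant `const · |γ(j)|` applies.
-/

open MeasureTheory Filter Finset Topology

noncomputable section

variable {Ω : Type*}

/-- σ-algebra generated by the field at sites whose `j`-th coordinate is `≤ r`. -/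
def sigmaLE {d : ℕ} {E : Type*} [MeasurableSpace Ω] [MeasurableSpace E]
    (ξ : (Fin d → ℤ) → Ω → E) (j : Fin d) (r : ℤ) : MeasurableSpace Ω :=
  ⨆ i ∈ {i : Fin d → ℤ | i j ≤ r}, MeasurableSpace.comap (ξ i) inferInstance

/-- σ-algebra generated by the field at sites whose `j`-th coordinate is `≥ r`. -/
def sigmaGE {d : ℕ} {E : Type*} [MeasurableSpace Ω] [MeasurableSpace E]
    (ξ : (Fin d → ℤ) → Ω → E) (j : Fin d) (r : ℤ) : MeasurableSpace Ω :=
  ⨆ i ∈ {i : Fin d → ℤ | r ≤ i j}, MeasurableSpace.comap (ξ i) inferInstance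

/-- φ-mixing coefficient in direction `j` at distance `r`. -/
def phiCoeff [MeasurableSpace Ω] {d : ℕ} {E : Type*} [MeasurableSpace E]
    (ξ : (Fin d → ℤ) → Ω → E) (P : Measure Ω) (j : Fin d) (r : ℤ) : ℝ :=
  sSup {x | ∃ A B : Set Ω, MeasurableSet[sigmaLE ξ j 0] A ∧ MeasurableSet[sigmaGE ξ j r] B ∧
    P A ≠ 0 ∧ x = |(P (A ∩ B)).toReal / (P A).toReal - (P B).toReal|}

/-- The (half-space) φ-mixing coefficient `φ(r)`, with the convention `φ(r) = 1` for `r ≤ 0`. -/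
def phiMix [MeasurableSpace Ω] {d : ℕ} {E : Type*} [MeasurableSpace E]
    (ξ : (Fin d → ℤ) → Ω → E) (P : Measure Ω) (r : ℤ) : ℝ :=
  if r ≤ 0 then 1 else ⨆ j : Fin d, phiCoeff ξ P j r

/-- Strict stationarity: all finite dimensional distributions are shift invariant. -/
def StrictStationary [MeasurableSpace Ω] {d : ℕ} {E : Type*} [MeasurableSpace E]
    (ξ : (Fin d → ℤ) → Ω → E) (P : Measure Ω) : Prop :=
  ∀ t : Fin d → ℤ,
    Measure.map (fun ω => (fun i => ξ (i + t) ω)) P = Measure.map (fun ω => (fun i => ξ i ω)) P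

/-- The index box `Γ_n = {1,…,n₁} × ⋯ × {1,…,n_d}`. -/
def box (d : ℕ) (n : Fin d → ℕ) : Finset (Fin d → ℤ) :=
  Finset.Icc 1 (fun i => (n i : ℤ))

/-- `Γ̃_n(j) = {i ∈ Γ_n : i + j ∈ Γ_n}`. -/
def boxJ (d : ℕ) (n : Fin d → ℕ) (j : Fin d → ℤ) : Finset (Fin d → ℤ) :=
  (box d n).filter (fun i => i + j ∈ box d n)

/-- The lag window `{j : |j_i| ≤ m_i ∀ i}`. -/
def lags (d : ℕ) (m : Fin d → ℕ) : Finset (Fin d → ℤ) :=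
  Finset.Icc (fun i => -(m i : ℤ)) (fun i => (m i : ℤ))

/-- Autocovariance matrix `γ(j) = E(ξ_0 ξ_jᵀ)`. -/
def acov [MeasurableSpace Ω] {d p : ℕ} (ξ : (Fin d → ℤ) → Ω → (Fin p → ℝ)) (P : Measure Ω)
    (j : Fin d → ℤ) : Fin p → Fin p → ℝ :=
  fun ν μ => ∫ ω, ξ 0 ω ν * ξ j ω μ ∂P

/-- Sample autocovariance `γ̂_n(j)`. -/
def acovHat {d p : ℕ} (ξ : (Fin d → ℤ) → Ω → (Fin p → ℝ)) (n : Fin d → ℕ) (j : Fin d → ℤ)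
    (ω : Ω) : Fin p → Fin p → ℝ :=
  fun ν μ => ((boxJ d n j).card : ℝ)⁻¹ * ∑ i ∈ boxJ d n j, ξ i ω ν * ξ (i + j) ω μ

/-- The estimator `σ̂²_n = ∑_{|j| ≤ m} w_m(j) γ̂_n(j)`. -/
def sigmaHat {d p : ℕ} (ξ : (Fin d → ℤ) → Ω → (Fin p → ℝ))
    (w : (Fin d → ℕ) → (Fin d → ℤ) → ℝ) (m n : Fin d → ℕ) (ω : Ω) : Fin p → Fin p → ℝ :=
  ∑ j ∈ lags d m, w m j • acovHat ξ n j ω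


/-- Autocovariance `γ(j) = E(ξ_0 ξ_j)` of a real-valued field. -/
def acov1 [MeasurableSpace Ω] {d : ℕ} (ξ : (Fin d → ℤ) → Ω → ℝ) (P : Measure Ω)
    (j : Fin d → ℤ) : ℝ :=
  ∫ ω, ξ 0 ω * ξ j ω ∂P

/-- Sample autocovariance `γ̂_n(j)` of a real-valued field. -/
def acovHat1 {d : ℕ} (ξ : (Fin d → ℤ) → Ω → ℝ) (n : Fin d → ℕ) (j : Fin d → ℤ) (ω : Ω) : ℝ :=
  ((boxJ d n j).card : ℝ)⁻¹ * ∑ i ∈ boxJ d n j, ξ i ω * ξ (i + j) ω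

/-- The covariance scheme `Σ(j,j') = ∑_{i ∈ ℤ^q} E[(ξ_0ξ_j − γ(j))(ξ_iξ_{i+j'} − γ(j'))]`. -/
def covY [MeasurableSpace Ω] {d : ℕ} (ξ : (Fin d → ℤ) → Ω → ℝ) (P : Measure Ω)
    (j k : Fin d → ℤ) : ℝ :=
  ∑' i : Fin d → ℤ,
    ∫ ω, (ξ 0 ω * ξ j ω - acov1 ξ P j) * (ξ i ω * ξ (i + k) ω - acov1 ξ P k) ∂P

/-- `μ` is the law of a centered Gaussian vector with covariance scheme `S`:
every linear combination is a centered one-dimensional Gaussian with the induced variance. -/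
def IsCenteredGaussianLaw {ι : Type*} [Fintype ι] (μ : Measure (ι → ℝ)) (S : ι → ι → ℝ) : Prop :=
  ∀ lam : ι → ℝ, μ.map (fun x => ∑ i, lam i * x i) =
    ProbabilityTheory.gaussianReal 0 (Real.toNNReal (∑ i, ∑ k, lam i * lam k * S i k))

/-! ### The covariance inequality under φ-mixing -/

/-- Discrete covariance inequality. Here `p`, `v` are the marginals of the joint weights `r`, and
`hd` bounds the total variation distance between `r a ·` and `p a * v`. Cauchy–Schwarz is applied
with the weights `|r a b - p a * v b|`: summing these over `b` produces the factor `φ`, while summing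
them over `a` costs only `2 * v b`. -/
theorem finite_cov_bound {S T : Finset ℝ} {p v : ℝ → ℝ} {r : ℝ → ℝ → ℝ} {φ : ℝ}
    (hr : ∀ a b, 0 ≤ r a b) (hp : ∀ a, 0 ≤ p a) (hv : ∀ b, 0 ≤ v b)
    (hp1 : ∑ a ∈ S, p a = 1) (hrv : ∀ b, ∑ a ∈ S, r a b = v b)
    (hd : ∀ a, ∑ b ∈ T, |r a b - p a * v b| ≤ 2 * φ * p a) :
    (∑ a ∈ S, ∑ b ∈ T, a * b * (r a b - p a * v b)) ^ 2 ≤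
      4 * φ * (∑ a ∈ S, a ^ 2 * p a) * ∑ b ∈ T, b ^ 2 * v b := by
  have h1 : ∑ x ∈ S ×ˢ T, x.1 ^ 2 * |r x.1 x.2 - p x.1 * v x.2| ≤
      2 * φ * ∑ a ∈ S, a ^ 2 * p a := by
    rw [Finset.sum_product, Finset.mul_sum]
    refine Finset.sum_le_sum fun a _ => ?_
    simp only
    rw [← Finset.mul_sum]
    nlinarith [mul_le_mul_of_nonneg_left (hd a) (sq_nonneg a)]
  have h2 : ∑ x ∈ S ×ˢ T, x.2 ^ 2 * |r x.1 x.2 - p x.1 * v x.2| ≤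
      2 * ∑ b ∈ T, b ^ 2 * v b := by
    rw [Finset.sum_product_right, Finset.mul_sum]
    refine Finset.sum_le_sum fun b _ => ?_
    simp only
    rw [← Finset.mul_sum]
    have : ∑ a ∈ S, |r a b - p a * v b| ≤ 2 * v b := by
      calc ∑ a ∈ S, |r a b - p a * v b| ≤ ∑ a ∈ S, (r a b + p a * v b) := by
            refine Finset.sum_le_sum fun a _ => ?_
            rw [abs_le]
            constructor <;> nlinarith [hr a b, mul_nonneg (hp a) (hv b)]
        _ = 2 * v b := by
            rw [Finset.sum_add_distrib, hrv, ← Finset.sum_mul, hp1]; ring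
    nlinarith [mul_le_mul_of_nonneg_left this (sq_nonneg b)]
  have h3 := Finset.sum_sq_le_sum_mul_sum_of_sq_le_mul (S ×ˢ T)
    (r := fun x => x.1 * x.2 * (r x.1 x.2 - p x.1 * v x.2))
    (f := fun x => x.1 ^ 2 * |r x.1 x.2 - p x.1 * v x.2|)
    (g := fun x => x.2 ^ 2 * |r x.1 x.2 - p x.1 * v x.2|)
    (fun x _ => by positivity) (fun x _ => by positivity)
    (fun x _ => by
      have := sq_abs (r x.1 x.2 - p x.1 * v x.2)
      refine le_of_eq ?_
      linear_combination (-(x.1 ^ 2 * x.2 ^ 2)) * this)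
  rw [Finset.sum_product] at h3
  refine h3.trans ?_
  have h5 : 0 ≤ ∑ x ∈ S ×ˢ T, x.2 ^ 2 * |r x.1 x.2 - p x.1 * v x.2| :=
    Finset.sum_nonneg fun x _ => by positivity
  have h6 : 0 ≤ ∑ x ∈ S ×ˢ T, x.1 ^ 2 * |r x.1 x.2 - p x.1 * v x.2| :=
    Finset.sum_nonneg fun x _ => by positivity
  calc _ ≤ (2 * φ * ∑ a ∈ S, a ^ 2 * p a) * (2 * ∑ b ∈ T, b ^ 2 * v b) :=
        mul_le_mul h1 h2 h5 (h6.trans h1)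
    _ = _ := by ring

theorem integral_finite_range [MeasurableSpace Ω] {P : Measure Ω} [IsProbabilityMeasure P]
    {f g : Ω → ℝ} (hf : Measurable f) (hg : Measurable g) {S T : Finset ℝ}
    (hS : ∀ ω, f ω ∈ S) (hT : ∀ ω, g ω ∈ T) (F : ℝ → ℝ → ℝ) :
    ∫ ω, F (f ω) (g ω) ∂P =
      ∑ a ∈ S, ∑ b ∈ T, F a b * P.real (f ⁻¹' {a} ∩ g ⁻¹' {b}) := by
  have hm : ∀ a b, MeasurableSet (f ⁻¹' {a} ∩ g ⁻¹' {b}) := fun a b =>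
    (hf (measurableSet_singleton a)).inter (hg (measurableSet_singleton b))
  have h1 : ∀ ω, F (f ω) (g ω) =
      ∑ a ∈ S, ∑ b ∈ T, (f ⁻¹' {a} ∩ g ⁻¹' {b}).indicator (fun _ => F a b) ω := by
    intro ω
    rw [Finset.sum_eq_single_of_mem (f ω) (hS ω), Finset.sum_eq_single_of_mem (g ω) (hT ω)]
    · simp
    · intro b _ hb; simp [hb.symm]
    · intro a _ ha
      exact Finset.sum_eq_zero fun b _ => by simp [ha.symm]
  have hi : ∀ a b, Integrable ((f ⁻¹' {a} ∩ g ⁻¹' {b}).indicator (fun _ => F a b)) P :=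
    fun a b => (integrable_const _).indicator (hm a b)
  simp_rw [h1]
  rw [integral_finsetSum _ fun a _ => integrable_finsetSum _ fun b _ => hi a b]
  refine Finset.sum_congr rfl fun a _ => ?_
  rw [integral_finsetSum _ fun b _ => hi a b]
  refine Finset.sum_congr rfl fun b _ => ?_
  rw [integral_indicator_const _ (hm a b), smul_eq_mul, mul_comm]

/-- The total variation of `U ↦ P(A ∩ {g ∈ U}) - P(A) P(g ∈ U)` is at most twice its supremum, by
splitting the points of `T` according to the sign of the summand. -/
theorem sum_abs_dependence_le [MeasurableSpace Ω] {P : Measure Ω} [IsProbabilityMeasure P]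
    {A : Set Ω} {g : Ω → ℝ} (hA : MeasurableSet A) (hg : Measurable g) {φ : ℝ}
    (hφ : ∀ U : Set ℝ, MeasurableSet U →
      |P.real (A ∩ g ⁻¹' U) - P.real A * P.real (g ⁻¹' U)| ≤ φ * P.real A) (T : Finset ℝ) :
    ∑ b ∈ T, |P.real (A ∩ g ⁻¹' {b}) - P.real A * P.real (g ⁻¹' {b})| ≤ 2 * φ * P.real A := by
  have key : ∀ U : Finset ℝ,
      |∑ b ∈ U, (P.real (A ∩ g ⁻¹' {b}) - P.real A * P.real (g ⁻¹' {b}))| ≤ φ * P.real A := by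
    intro U
    have e1 : ∑ b ∈ U, P.real (g ⁻¹' {b}) = P.real (g ⁻¹' (U : Set ℝ)) := by
      rw [← measureReal_biUnion_finset]
      · congr 1; ext; simp
      · intro a _ b _ hab
        exact Disjoint.preimage _ (by simpa using hab)
      · intro b _; exact hg (measurableSet_singleton b)
    have e2 : ∑ b ∈ U, P.real (A ∩ g ⁻¹' {b}) = P.real (A ∩ g ⁻¹' (U : Set ℝ)) := by
      rw [← measureReal_biUnion_finset]
      · congr 1; ext; simp
      · intro a _ b _ hab
        exact (Disjoint.preimage _ (by simpa using hab)).mono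
          Set.inter_subset_right Set.inter_subset_right
      · intro b _; exact hA.inter (hg (measurableSet_singleton b))
    rw [Finset.sum_sub_distrib, ← Finset.mul_sum, e1, e2]
    exact hφ _ U.measurableSet
  rw [← Finset.sum_filter_add_sum_filter_not T
    (fun b => 0 ≤ P.real (A ∩ g ⁻¹' {b}) - P.real A * P.real (g ⁻¹' {b}))]
  rw [Finset.sum_congr rfl fun b hb => abs_of_nonneg (Finset.mem_filter.1 hb).2,
    Finset.sum_congr (s₁ := T.filter fun b => ¬ _) rfl fun b hb =>
      abs_of_neg (not_le.1 (Finset.mem_filter.1 hb).2), Finset.sum_neg_distrib]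
  linarith [(abs_le.1 (key (T.filter fun b =>
      0 ≤ P.real (A ∩ g ⁻¹' {b}) - P.real A * P.real (g ⁻¹' {b})))).2,
    (abs_le.1 (key (T.filter fun b =>
      ¬ 0 ≤ P.real (A ∩ g ⁻¹' {b}) - P.real A * P.real (g ⁻¹' {b})))).1]

/-- The `φ`-mixing covariance inequality for finitely valued variables. -/
theorem cov_sq_le_of_finite [mΩ : MeasurableSpace Ω] {P : Measure Ω} [IsProbabilityMeasure P]
    {f g : Ω → ℝ} (hf : Measurable f) (hg : Measurable g) {φ : ℝ}
    (hφ : ∀ U V : Set ℝ, MeasurableSet U → MeasurableSet V →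
      |P.real (f ⁻¹' U ∩ g ⁻¹' V) - P.real (f ⁻¹' U) * P.real (g ⁻¹' V)| ≤ φ * P.real (f ⁻¹' U))
    (hff : (Set.range f).Finite) (hgf : (Set.range g).Finite) :
    (∫ ω, f ω * g ω ∂P - (∫ ω, f ω ∂P) * ∫ ω, g ω ∂P) ^ 2 ≤
      4 * φ * (∫ ω, f ω ^ 2 ∂P) * ∫ ω, g ω ^ 2 ∂P := by
  set S := hff.toFinset
  set T := hgf.toFinset
  have hS : ∀ ω, f ω ∈ S := fun ω => by simp [S]
  have hT : ∀ ω, g ω ∈ T := fun ω => by simp [T]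
  have one : ∀ {h : Ω → ℝ}, Measurable h → ∀ {R : Finset ℝ}, (∀ ω, h ω ∈ R) → ∀ F : ℝ → ℝ,
      ∫ ω, F (h ω) ∂P = ∑ a ∈ R, F a * P.real (h ⁻¹' {a}) := by
    intro h hh R hR F
    have := integral_finite_range (P := P) hh (measurable_const (a := (0 : ℝ))) hR
      (T := {0}) (by simp) (fun x _ => F x)
    simpa using this
  rw [integral_finite_range hf hg hS hT (fun x y => x * y), one hf hS (fun x => x),
    one hg hT (fun x => x), one hf hS (fun x => x ^ 2), one hg hT (fun x => x ^ 2)]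
  have := finite_cov_bound (S := S) (T := T) (p := fun a => P.real (f ⁻¹' {a}))
    (v := fun b => P.real (g ⁻¹' {b})) (r := fun a b => P.real (f ⁻¹' {a} ∩ g ⁻¹' {b})) (φ := φ)
    (fun _ _ => measureReal_nonneg) (fun _ => measureReal_nonneg) (fun _ => measureReal_nonneg)
    (by have := one hf hS (fun _ => 1); simpa using this.symm)
    (by
      intro b
      rw [← measureReal_biUnion_finset]
      · congr 1; ext ω; simpa using fun _ => hS ω
      · intro a _ a' _ hab
        exact (Disjoint.preimage _ (by simpa using hab)).mono
          Set.inter_subset_left Set.inter_subset_left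
      · intro a _; exact (hf (measurableSet_singleton a)).inter (hg (measurableSet_singleton b)))
    (fun a => sum_abs_dependence_le (hf (measurableSet_singleton a)) hg
      (fun U hU => hφ _ U (measurableSet_singleton a) hU) T)
  convert this using 2
  rw [Finset.sum_mul_sum, ← Finset.sum_sub_distrib]
  refine Finset.sum_congr rfl fun a _ => ?_
  rw [← Finset.sum_sub_distrib]
  exact Finset.sum_congr rfl fun b _ => by ring

/-- The `φ`-mixing covariance inequality `Cov(X, Y)² ≤ 4 φ E[X²] E[Y²]`, obtained from the finitely
valued case by rounding `X` and `Y` with the same simple functions on `ℝ`, so that the mixing bound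
is inherited. -/
theorem cov_sq_le [mΩ : MeasurableSpace Ω] {P : Measure Ω} [IsProbabilityMeasure P]
    {X Y : Ω → ℝ} (hX : Measurable X) (hY : Measurable Y) {φ : ℝ}
    (hφ : ∀ U V : Set ℝ, MeasurableSet U → MeasurableSet V →
      |P.real (X ⁻¹' U ∩ Y ⁻¹' V) - P.real (X ⁻¹' U) * P.real (Y ⁻¹' V)| ≤ φ * P.real (X ⁻¹' U))
    (hX2 : MemLp X 2 P) (hY2 : MemLp Y 2 P) :
    (∫ ω, X ω * Y ω ∂P - (∫ ω, X ω ∂P) * ∫ ω, Y ω ∂P) ^ 2 ≤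
      4 * φ * (∫ ω, X ω ^ 2 ∂P) * ∫ ω, Y ω ^ 2 ∂P := by
  -- `s n` are simple functions on `ℝ` with `|s n x| ≤ 2|x|` and `s n x → x`
  obtain ⟨s, sb, sl⟩ : ∃ s : ℕ → SimpleFunc ℝ ℝ, (∀ n x, ‖s n x‖ ≤ 2 * ‖x‖) ∧
      ∀ x, Tendsto (fun n => s n x) atTop (𝓝 x) := by
    refine ⟨fun n => SimpleFunc.approxOn (fun x : ℝ => x) measurable_id Set.univ 0
      (Set.mem_univ _) n, fun n x => ?_, fun x => ?_⟩
    · have := SimpleFunc.norm_approxOn_zero_le (f := fun x : ℝ => x) measurable_id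
        (Set.mem_univ (0 : ℝ)) x n
      rw [two_mul]; exact this
    · exact SimpleFunc.tendsto_approxOn (f := fun x : ℝ => x) measurable_id
        (Set.mem_univ (0 : ℝ)) (by simp)
  have dom : ∀ (F : ℝ → ℝ → ℝ) (B : ℝ → ℝ → ℝ), Continuous (fun z : ℝ × ℝ => F z.1 z.2) →
      (∀ n x y, ‖F (s n x) (s n y)‖ ≤ B x y) → Integrable (fun ω => B (X ω) (Y ω)) P →
      Tendsto (fun n => ∫ ω, F (s n (X ω)) (s n (Y ω)) ∂P) atTop
        (𝓝 (∫ ω, F (X ω) (Y ω) ∂P)) := by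
    intro F B hF hb hB
    refine tendsto_integral_of_dominated_convergence (fun ω => B (X ω) (Y ω)) ?_ hB ?_ ?_
    · intro n
      exact (hF.measurable.comp (((s n).measurable.comp hX).prodMk
        ((s n).measurable.comp hY))).aestronglyMeasurable
    · intro n; exact Eventually.of_forall fun ω => hb n _ _
    · exact Eventually.of_forall fun ω =>
        (hF.tendsto (X ω, Y ω)).comp ((sl (X ω)).prodMk_nhds (sl (Y ω)))
  have iX := hX2.integrable one_le_two
  have iY := hY2.integrable one_le_two
  have tXY := dom (fun x y => x * y) (fun x y => 4 * ‖x * y‖) (by fun_prop)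
    (fun n x y => by
      rw [norm_mul, norm_mul]
      nlinarith [mul_le_mul (sb n x) (sb n y) (norm_nonneg _) (by positivity)])
    ((hX2.integrable_mul hY2).norm.const_mul 4)
  have tX := dom (fun x y => x) (fun x y => 2 * ‖x‖) (by fun_prop)
    (fun n x y => sb n x) (iX.norm.const_mul 2)
  have tY := dom (fun x y => y) (fun x y => 2 * ‖y‖) (by fun_prop)
    (fun n x y => sb n y) (iY.norm.const_mul 2)
  have sq : ∀ n x, ‖(s n x) ^ 2‖ ≤ 4 * x ^ 2 := fun n x => by
    have h1 := sb n x
    rw [norm_pow]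
    have : ‖x‖ ^ 2 = x ^ 2 := by simp
    nlinarith [norm_nonneg (s n x), norm_nonneg x]
  have tX2 := dom (fun x y => x ^ 2) (fun x y => 4 * x ^ 2) (by fun_prop)
    (fun n x y => sq n x) (hX2.integrable_sq.const_mul 4)
  have tY2 := dom (fun x y => y ^ 2) (fun x y => 4 * y ^ 2) (by fun_prop)
    (fun n x y => sq n y) (hY2.integrable_sq.const_mul 4)
  refine le_of_tendsto_of_tendsto' ((tXY.sub (tX.mul tY)).pow 2)
    ((tX2.const_mul (4 * φ)).mul tY2) fun n => ?_
  refine cov_sq_le_of_finite (f := fun ω => s n (X ω)) (g := fun ω => s n (Y ω))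
    ((s n).measurable.comp hX) ((s n).measurable.comp hY) ?_ ?_ ?_
  · intro U V hU hV
    exact hφ (s n ⁻¹' U) (s n ⁻¹' V) ((s n).measurable hU) ((s n).measurable hV)
  · exact (s n).finite_range.subset (Set.range_comp_subset_range X (s n))
  · exact (s n).finite_range.subset (Set.range_comp_subset_range Y (s n))

/-! ### Covariances of a stationary field and its lagged products -/

/-- The set whose supremum defines `phiCoeff` is bounded, so that `sSup` is a genuine supremum. -/
theorem phiCoeff_bddAbove [MeasurableSpace Ω] {q : ℕ} (ξ : (Fin q → ℤ) → Ω → ℝ) (P : Measure Ω)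
    [IsProbabilityMeasure P] (l : Fin q) (r : ℤ) :
    BddAbove {x : ℝ | ∃ A B : Set Ω, MeasurableSet[sigmaLE ξ l 0] A ∧
      MeasurableSet[sigmaGE ξ l r] B ∧ P A ≠ 0 ∧
      x = |(P (A ∩ B)).toReal / (P A).toReal - (P B).toReal|} := by
  refine ⟨1, ?_⟩
  rintro x ⟨A, B, -, -, -, rfl⟩
  have h1 : (P (A ∩ B)).toReal / (P A).toReal ≤ 1 :=
    div_le_one_of_le₀ (measureReal_mono (μ := P) Set.inter_subset_left) ENNReal.toReal_nonneg
  have h2 : 0 ≤ (P (A ∩ B)).toReal / (P A).toReal := by positivity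
  have h3 : (P B).toReal ≤ 1 := measureReal_le_one (μ := P)
  have h4 : 0 ≤ (P B).toReal := ENNReal.toReal_nonneg
  rw [abs_le]
  constructor <;> linarith

theorem phiMix_nonneg [MeasurableSpace Ω] {q : ℕ} (ξ : (Fin q → ℤ) → Ω → ℝ) (P : Measure Ω)
    (r : ℤ) : 0 ≤ phiMix ξ P r := by
  unfold phiMix
  split_ifs
  · exact zero_le_one
  · refine Real.iSup_nonneg fun l => Real.sSup_nonneg ?_
    rintro x ⟨A, B, -, -, -, rfl⟩
    exact abs_nonneg _

/-- Mixing bound in product form, which also covers `P(A) = 0`. For `r ≤ 0` the convention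
`phiMix ξ P r = 1` makes it trivial, and no condition on `A` and `B` is needed. -/
theorem abs_dependence_le_phiMix [MeasurableSpace Ω] {q : ℕ} (ξ : (Fin q → ℤ) → Ω → ℝ)
    (P : Measure Ω) [IsProbabilityMeasure P] (l : Fin q) (r : ℤ) {A B : Set Ω}
    (h : 0 < r → MeasurableSet[sigmaLE ξ l 0] A ∧ MeasurableSet[sigmaGE ξ l r] B) :
    |P.real (A ∩ B) - P.real A * P.real B| ≤ phiMix ξ P r * P.real A := by
  rcases le_or_gt r 0 with hr | hr
  · rw [phiMix, if_pos hr, one_mul]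
    have h1 : P.real (A ∩ B) ≤ P.real A := measureReal_mono Set.inter_subset_left
    have h2 : P.real B ≤ 1 := measureReal_le_one
    have h3 : 0 ≤ P.real B := measureReal_nonneg
    have h4 : 0 ≤ P.real A := measureReal_nonneg
    have h5 : 0 ≤ P.real (A ∩ B) := measureReal_nonneg
    rw [abs_le]
    constructor <;> nlinarith
  · obtain ⟨hA, hB⟩ := h hr
    rw [phiMix, if_neg (not_le.2 hr)]
    by_cases hA0 : P A = 0
    · have h1 : P.real A = 0 := by simp [measureReal_def, hA0]
      have h2 : P.real (A ∩ B) = 0 :=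
        le_antisymm (h1 ▸ measureReal_mono Set.inter_subset_left) measureReal_nonneg
      simp [h1, h2]
    · have hpos : 0 < P.real A :=
        lt_of_le_of_ne measureReal_nonneg fun h0 => hA0 (by
          simpa [measureReal_def, ENNReal.toReal_eq_zero_iff] using h0.symm)
      have h1 : |P.real (A ∩ B) / P.real A - P.real B| ≤ ⨆ j : Fin q, phiCoeff ξ P j r :=
        (le_csSup (phiCoeff_bddAbove ξ P l r) ⟨A, B, hA, hB, hA0, rfl⟩).trans
          (le_ciSup (f := fun j => phiCoeff ξ P j r) (Set.finite_range _).bddAbove l)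
      calc |P.real (A ∩ B) - P.real A * P.real B|
          = |P.real (A ∩ B) / P.real A - P.real B| * P.real A := by
            rw [← abs_of_pos hpos, ← abs_mul, abs_of_pos hpos, sub_mul,
              div_mul_cancel₀ _ hpos.ne', mul_comm (P.real B)]
        _ ≤ _ := mul_le_mul_of_nonneg_right h1 hpos.le

theorem measurable_sigmaLE [MeasurableSpace Ω] {q : ℕ} (ξ : (Fin q → ℤ) → Ω → ℝ) {l : Fin q}
    {r : ℤ} {i : Fin q → ℤ} (h : i l ≤ r) : Measurable[sigmaLE ξ l r] (ξ i) :=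
  Measurable.of_comap_le
    (le_iSup₂ (f := fun (i : Fin q → ℤ) (_ : i ∈ {i : Fin q → ℤ | i l ≤ r}) =>
      MeasurableSpace.comap (ξ i) inferInstance) i h)

theorem measurable_sigmaGE [MeasurableSpace Ω] {q : ℕ} (ξ : (Fin q → ℤ) → Ω → ℝ) {l : Fin q}
    {r : ℤ} {i : Fin q → ℤ} (h : r ≤ i l) : Measurable[sigmaGE ξ l r] (ξ i) :=
  Measurable.of_comap_le
    (le_iSup₂ (f := fun (i : Fin q → ℤ) (_ : i ∈ {i : Fin q → ℤ | r ≤ i l}) =>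
      MeasurableSpace.comap (ξ i) inferInstance) i h)

/-- The field `η_i = G(ξ_i, ξ_{i+j})`. It is used for `G(x,y) = x` (giving `ξ` itself) and for
`G(x,y) = xy` (giving the lagged products whose averages are the sample autocovariances). -/
def pairField {q : ℕ} (G : ℝ → ℝ → ℝ) (ξ : (Fin q → ℤ) → Ω → ℝ) (j i : Fin q → ℤ) (ω : Ω) : ℝ :=
  G (ξ i ω) (ξ (i + j) ω)

/-- The maximum norm `max_l |k_l|` of a site, as a natural number. -/
def siteNorm {q : ℕ} (k : Fin q → ℤ) : ℕ := Finset.univ.sup fun l => (k l).natAbs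

theorem siteNorm_le {q : ℕ} {k : Fin q → ℤ} {M : ℕ} :
    siteNorm k ≤ M ↔ ∀ l, (k l).natAbs ≤ M := by
  simp [siteNorm]

theorem siteNorm_neg {q : ℕ} (k : Fin q → ℤ) : siteNorm (-k) = siteNorm k := by
  simp [siteNorm]

theorem exists_natAbs_eq_siteNorm {q : ℕ} [Nonempty (Fin q)] (k : Fin q → ℤ) :
    ∃ l, (k l).natAbs = siteNorm k := by
  obtain ⟨l, -, hl⟩ := Finset.exists_mem_eq_sup Finset.univ Finset.univ_nonempty
    fun l => (k l).natAbs
  exact ⟨l, hl.symm⟩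

section PairField

variable [MeasurableSpace Ω] {P : Measure Ω} {q : ℕ} {ξ : (Fin q → ℤ) → Ω → ℝ}
  {G : ℝ → ℝ → ℝ} {j : Fin q → ℤ}

theorem measurable_pairField (hmeas : ∀ i, Measurable (ξ i))
    (hG : Measurable (Function.uncurry G)) (i : Fin q → ℤ) : Measurable (pairField G ξ j i) :=
  hG.comp ((hmeas i).prodMk (hmeas (i + j)))

/-- Measurable functionals of the whole field have a shift-invariant law. -/
theorem identDistrib_shift (hmeas : ∀ i, Measurable (ξ i)) (hstat : StrictStationary ξ P)
    {H : ((Fin q → ℤ) → ℝ) → ℝ} (hH : Measurable H) (t : Fin q → ℤ) :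
    ProbabilityTheory.IdentDistrib (fun ω => H (fun i => ξ (i + t) ω))
      (fun ω => H (fun i => ξ i ω)) P P := by
  have h : ProbabilityTheory.IdentDistrib (fun ω => (fun i => ξ (i + t) ω))
      (fun ω => (fun i => ξ i ω)) P P :=
    ⟨(measurable_pi_lambda _ fun i => hmeas _).aemeasurable,
      (measurable_pi_lambda _ fun i => hmeas _).aemeasurable, hstat t⟩
  exact h.comp hH

theorem identDistrib_pairField (hmeas : ∀ i, Measurable (ξ i)) (hstat : StrictStationary ξ P)
    (hG : Measurable (Function.uncurry G)) (i : Fin q → ℤ) :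
    ProbabilityTheory.IdentDistrib (pairField G ξ j i) (pairField G ξ j 0) P P := by
  have hH : Measurable fun x : (Fin q → ℤ) → ℝ => G (x 0) (x (0 + j)) := by
    have := hG.comp ((measurable_pi_apply (X := fun _ : Fin q → ℤ => ℝ) 0).prodMk
      (measurable_pi_apply (0 + j)))
    exact this
  have e : pairField G ξ j i = fun ω => G (ξ (0 + i) ω) (ξ (0 + j + i) ω) := by
    funext ω
    rw [pairField, zero_add, zero_add, add_comm i j]
  rw [e]
  exact identDistrib_shift hmeas hstat hH i

theorem integral_pairField_mul (hmeas : ∀ i, Measurable (ξ i)) (hstat : StrictStationary ξ P)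
    (hG : Measurable (Function.uncurry G)) (i i' t : Fin q → ℤ) :
    ∫ ω, pairField G ξ j (i + t) ω * pairField G ξ j (i' + t) ω ∂P =
      ∫ ω, pairField G ξ j i ω * pairField G ξ j i' ω ∂P := by
  have hH : ∀ i : Fin q → ℤ, Measurable fun x : (Fin q → ℤ) → ℝ => G (x i) (x (i + j)) := by
    intro i
    have := hG.comp ((measurable_pi_apply (X := fun _ : Fin q → ℤ => ℝ) i).prodMk
      (measurable_pi_apply (i + j)))
    exact this
  have := (identDistrib_shift hmeas hstat ((hH i).mul (hH i')) t).integral_eq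
  simpa [pairField, add_right_comm] using this

/-- Covariance inequality for the pair field when the two pairs of sites are already separated by
the slab `0 < x_l < r`. For `r ≤ 0` no separation is needed, because then `φ(r) = 1`. -/
theorem pairField_cov_sq_le_of_separated [IsProbabilityMeasure P] (hmeas : ∀ i, Measurable (ξ i))
    (hstat : StrictStationary ξ P) (hG : Measurable (Function.uncurry G))
    (hL2 : MemLp (pairField G ξ j 0) 2 P) (l : Fin q) (r : ℤ) (i i' : Fin q → ℤ)
    (h : 0 < r → i l ≤ 0 ∧ (i + j) l ≤ 0 ∧ r ≤ i' l ∧ r ≤ (i' + j) l) :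
    (∫ ω, pairField G ξ j i ω * pairField G ξ j i' ω ∂P - (∫ ω, pairField G ξ j 0 ω ∂P) ^ 2) ^ 2 ≤
      4 * phiMix ξ P r * (∫ ω, pairField G ξ j 0 ω ^ 2 ∂P) ^ 2 := by
  have hid := fun i => identDistrib_pairField (j := j) hmeas hstat hG i
  have hsq : ∀ i, ∫ ω, pairField G ξ j i ω ^ 2 ∂P = ∫ ω, pairField G ξ j 0 ω ^ 2 ∂P := fun i =>
    ((hid i).comp (measurable_id.pow_const 2)).integral_eq
  have := cov_sq_le (P := P) (X := pairField G ξ j i) (Y := pairField G ξ j i')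
    (φ := phiMix ξ P r) (measurable_pairField hmeas hG i) (measurable_pairField hmeas hG i')
    (fun U V hU hV => abs_dependence_le_phiMix ξ P l r fun hr => by
      obtain ⟨h1, h2, h3, h4⟩ := h hr
      constructor
      · exact hG.comp ((measurable_sigmaLE ξ h1).prodMk (measurable_sigmaLE ξ h2)) hU
      · exact hG.comp ((measurable_sigmaGE ξ h3).prodMk (measurable_sigmaGE ξ h4)) hV)
    ((hid i).memLp_iff.2 hL2) ((hid i').memLp_iff.2 hL2)
  rw [hsq i, hsq i', (hid i).integral_eq, (hid i').integral_eq] at this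
  calc _ = _ := by rw [sq (∫ ω, pairField G ξ j 0 ω ∂P)]
    _ ≤ _ := this
    _ = _ := by ring

/-- For a lag `j` of maximum norm at most `M`, the covariance of the pair field at distance `k`
is controlled by `φ(‖k‖ - M)`. -/
theorem pairField_cov_le [Nonempty (Fin q)] [IsProbabilityMeasure P]
    (hmeas : ∀ i, Measurable (ξ i))
    (hstat : StrictStationary ξ P) (hG : Measurable (Function.uncurry G))
    (hL2 : MemLp (pairField G ξ j 0) 2 P) {M : ℕ} (hj : siteNorm j ≤ M) (k : Fin q → ℤ) :
    |∫ ω, pairField G ξ j 0 ω * pairField G ξ j k ω ∂P - (∫ ω, pairField G ξ j 0 ω ∂P) ^ 2| ≤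
      2 * Real.sqrt (phiMix ξ P ((siteNorm k : ℤ) - M)) * ∫ ω, pairField G ξ j 0 ω ^ 2 ∂P := by
  have hV : 0 ≤ ∫ ω, pairField G ξ j 0 ω ^ 2 ∂P := integral_nonneg fun _ => sq_nonneg _
  have hpos : ∀ k : Fin q → ℤ, ∀ l, k l = siteNorm k →
      (∫ ω, pairField G ξ j 0 ω * pairField G ξ j k ω ∂P -
        (∫ ω, pairField G ξ j 0 ω ∂P) ^ 2) ^ 2 ≤
      4 * phiMix ξ P ((siteNorm k : ℤ) - M) * (∫ ω, pairField G ξ j 0 ω ^ 2 ∂P) ^ 2 := by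
    intro k l hl
    -- after this translation the sites `0`, `j` lie in the half-space `x_l ≤ 0`
    set t : Fin q → ℤ := fun _ => -max 0 (j l) with ht
    rw [← integral_pairField_mul hmeas hstat hG 0 k t]
    refine pairField_cov_sq_le_of_separated hmeas hstat hG hL2 l _ _ _ fun hr => ?_
    have hjl := siteNorm_le.1 hj l
    simp only [ht, Pi.add_apply, Pi.zero_apply]
    omega
  obtain ⟨l, hl⟩ := exists_natAbs_eq_siteNorm k
  have hsq : (∫ ω, pairField G ξ j 0 ω * pairField G ξ j k ω ∂P -
        (∫ ω, pairField G ξ j 0 ω ∂P) ^ 2) ^ 2 ≤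
      4 * phiMix ξ P ((siteNorm k : ℤ) - M) * (∫ ω, pairField G ξ j 0 ω ^ 2 ∂P) ^ 2 := by
    rcases le_total 0 (k l) with h0 | h0
    · exact hpos k l (by omega)
    · have := hpos (-k) l (by rw [siteNorm_neg, Pi.neg_apply]; omega)
      rw [siteNorm_neg, ← integral_pairField_mul hmeas hstat hG 0 (-k) k] at this
      simpa [mul_comm] using this
  refine abs_le_of_sq_le_sq (hsq.trans (le_of_eq ?_)) (by positivity)
  rw [mul_pow, mul_pow, Real.sq_sqrt (phiMix_nonneg ξ P _)]
  norm_num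

end PairField

/-! ### Counting lattice sites -/

theorem mem_lags_const {q : ℕ} {R : ℕ} {k : Fin q → ℤ} :
    k ∈ lags q (fun _ => R) ↔ siteNorm k ≤ R := by
  rw [siteNorm_le, lags, Finset.mem_Icc, Pi.le_def, Pi.le_def, ← forall_and]
  exact forall_congr' fun l => by omega

theorem card_lags_const (q R : ℕ) : (lags q (fun _ => R)).card = (2 * R + 1) ^ q := by
  rw [lags, Pi.card_Icc]
  simp only [Int.card_Icc, Finset.prod_const, Finset.card_univ, Fintype.card_fin]
  congr 1
  omega

/-- A sphere of radius `R + 1` for the maximum norm has at most `2q(2R+3)^(q-1)` sites, being the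
difference of two cubes. -/
theorem card_sphere_le {q : ℕ} (F : Finset (Fin q → ℤ)) (R : ℕ)
    (hF : ∀ k ∈ F, siteNorm k = R + 1) :
    (F.card : ℝ) ≤ 2 * q * (2 * (R + 1) + 1) ^ (q - 1) := by
  have hsub : F ⊆ lags q (fun _ => R + 1) \ lags q (fun _ => R) := fun k hk => by
    rw [Finset.mem_sdiff, mem_lags_const, mem_lags_const, hF k hk]
    omega
  have hle : lags q (fun _ => R) ⊆ lags q (fun _ => R + 1) := fun k => by
    rw [mem_lags_const, mem_lags_const]
    omega
  have h1 := Finset.card_le_card hsub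
  have h2 := Finset.card_sdiff_add_card_eq_card hle
  rw [card_lags_const, card_lags_const] at h2
  have h3 : (F.card : ℝ) + (2 * R + 1) ^ q ≤ (2 * (R + 1) + 1) ^ q := by
    exact_mod_cast (by omega : F.card + (2 * R + 1) ^ q ≤ (2 * (R + 1) + 1) ^ q)
  have h4 := abs_pow_sub_pow_le (2 * ((R : ℝ) + 1) + 1) (2 * R + 1) q
  have h5 : max |2 * ((R : ℝ) + 1) + 1| |2 * (R : ℝ) + 1| = 2 * (R + 1) + 1 := by
    rw [abs_of_nonneg (by positivity), abs_of_nonneg (by positivity)]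
    exact max_eq_left (by linarith)
  rw [h5, show (2 * ((R : ℝ) + 1) + 1) - (2 * R + 1) = 2 by ring, abs_two] at h4
  linarith [(abs_le.1 h4).2]

/-- Spheres of radius `M + r` in `ℤ^q` have `O((M r)^{q-1})` points, so a summable profile `f` of
the distance to the ball of radius `M` has total mass `O(M^q)`. -/
theorem sum_gap_le {q : ℕ} (hq : 1 ≤ q) (f : ℤ → ℝ) (hf0 : ∀ r, 0 ≤ f r)
    (hf1 : ∀ r ≤ 0, f r ≤ 1) (hf : Summable fun r : ℕ => (r : ℝ) ^ (q - 1) * f r) :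
    ∃ K : ℝ, 0 ≤ K ∧ ∀ M : ℕ, 1 ≤ M → ∀ F : Finset (Fin q → ℤ),
      ∑ k ∈ F, f ((siteNorm k : ℤ) - M) ≤ K * (M : ℝ) ^ q := by
  set S := ∑' r : ℕ, (r : ℝ) ^ (q - 1) * f r with hS
  have hS0 : 0 ≤ S := tsum_nonneg fun r => mul_nonneg (by positivity) (hf0 _)
  refine ⟨3 ^ q + 2 * q * 5 ^ (q - 1) * S, by positivity, fun M hM F => ?_⟩
  have hM' : (1 : ℝ) ≤ M := by exact_mod_cast hM
  have h1 : ∑ k ∈ F.filter (fun k => siteNorm k ≤ M), f ((siteNorm k : ℤ) - M) ≤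
      3 ^ q * (M : ℝ) ^ q := by
    calc _ ≤ ∑ k ∈ F.filter (fun k => siteNorm k ≤ M), (1 : ℝ) := by
          refine Finset.sum_le_sum fun k hk => hf1 _ ?_
          have := (Finset.mem_filter.1 hk).2
          omega
      _ = ((F.filter (fun k => siteNorm k ≤ M)).card : ℝ) := by simp
      _ ≤ ((lags q (fun _ => M)).card : ℝ) := by
          exact_mod_cast Finset.card_le_card fun k hk =>
            mem_lags_const.2 (Finset.mem_filter.1 hk).2
      _ = (2 * M + 1) ^ q := by rw [card_lags_const]; push_cast; rfl
      _ ≤ (3 * M) ^ q := pow_le_pow_left₀ (by positivity) (by linarith) _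
      _ = _ := mul_pow _ _ _
  set F' := F.filter (fun k => ¬ siteNorm k ≤ M) with hF'
  have h2 : ∑ k ∈ F', f ((siteNorm k : ℤ) - M) ≤ 2 * q * 5 ^ (q - 1) * S * (M : ℝ) ^ q := by
    set N := F'.sup siteNorm
    have hmap : ∀ k ∈ F', siteNorm k - M ∈ Finset.range (N + 1) := fun k hk => by
      have := Finset.le_sup (f := siteNorm) hk
      rw [Finset.mem_range]
      omega
    rw [← Finset.sum_fiberwise_of_maps_to hmap]
    have hterm : ∀ r ∈ Finset.range (N + 1),
        ∑ k ∈ F'.filter (fun k => siteNorm k - M = r), f ((siteNorm k : ℤ) - M) ≤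
        2 * q * 5 ^ (q - 1) * (M : ℝ) ^ (q - 1) * ((r : ℝ) ^ (q - 1) * f r) := by
      intro r _
      rcases Nat.eq_zero_or_pos r with rfl | hr
      · rw [Finset.sum_eq_zero fun k hk => ?_]
        · have := hf0 (0 : ℕ); positivity
        · simp only [hF', Finset.mem_filter] at hk; omega
      · have hr' : (1 : ℝ) ≤ r := by exact_mod_cast hr
        have e : ∀ k ∈ F'.filter (fun k => siteNorm k - M = r),
            f ((siteNorm k : ℤ) - M) = f r := fun k hk => by
          simp only [hF', Finset.mem_filter] at hk
          congr 1; omega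
        have hc := card_sphere_le (F'.filter (fun k => siteNorm k - M = r)) (M + r - 1)
          fun k hk => by simp only [hF', Finset.mem_filter] at hk; omega
        have hcast : (((M + r - 1 : ℕ) : ℝ) + 1) = M + r := by
          rw [Nat.cast_sub (by omega)]; push_cast; ring
        rw [hcast] at hc
        rw [Finset.sum_congr rfl e, Finset.sum_const, nsmul_eq_mul]
        have hbase : 2 * ((M : ℝ) + r) + 1 ≤ 5 * (M * r) := by
          nlinarith [mul_nonneg (sub_nonneg.2 hM') (sub_nonneg.2 hr')]
        calc _ ≤ 2 * q * (2 * ((M : ℝ) + r) + 1) ^ (q - 1) * f r :=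
              mul_le_mul_of_nonneg_right hc (hf0 _)
          _ ≤ 2 * q * (5 * (M * r)) ^ (q - 1) * f r :=
              mul_le_mul_of_nonneg_right (mul_le_mul_of_nonneg_left
                (pow_le_pow_left₀ (by positivity) hbase _) (by positivity)) (hf0 _)
          _ = _ := by rw [mul_pow, mul_pow]; ring
    calc _ ≤ ∑ r ∈ Finset.range (N + 1),
          2 * q * 5 ^ (q - 1) * (M : ℝ) ^ (q - 1) * ((r : ℝ) ^ (q - 1) * f r) :=
          Finset.sum_le_sum hterm
      _ ≤ 2 * q * 5 ^ (q - 1) * (M : ℝ) ^ (q - 1) * S := by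
          rw [← Finset.mul_sum]
          exact mul_le_mul_of_nonneg_left
            (hf.sum_le_tsum _ fun r _ => mul_nonneg (by positivity) (hf0 _)) (by positivity)
      _ ≤ 2 * q * 5 ^ (q - 1) * (M : ℝ) ^ q * S := by
          gcongr 2 * q * 5 ^ (q - 1) * ?_ * S
          exact pow_le_pow_right₀ hM' (by omega)
      _ = _ := by ring
  rw [← Finset.sum_filter_add_sum_filter_not F (fun k => siteNorm k ≤ M)]
  linarith

/-- The set of sites averaged in `acovHat1 ξ n j` contains the box `[1 + M, n - M]` when `‖j‖ ≤ M`.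
The truncated difference `N - 2 * M` keeps the bound valid for small `N`. -/
theorem pow_le_card_boxJ {q : ℕ} {n : Fin q → ℕ} {j : Fin q → ℤ} {M N : ℕ}
    (hj : siteNorm j ≤ M) (hn : ∀ l, N ≤ n l) : (N - 2 * M) ^ q ≤ (boxJ q n j).card := by
  have hsub : Finset.Icc (fun _ => (1 + M : ℤ)) (fun l => (n l : ℤ) - M) ⊆ boxJ q n j := by
    intro i hi
    have hjl := siteNorm_le.1 hj
    rw [Finset.mem_Icc, Pi.le_def, Pi.le_def] at hi
    simp only [boxJ, _root_.box, Finset.mem_filter, Finset.mem_Icc, Pi.le_def, Pi.add_apply,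
      Pi.one_apply]
    refine ⟨⟨fun l => ?_, fun l => ?_⟩, fun l => ?_, fun l => ?_⟩ <;>
    · have := hi.1 l
      have := hi.2 l
      have := hjl l
      omega
  refine le_trans ?_ (Finset.card_le_card hsub)
  rw [Pi.card_Icc]
  calc (N - 2 * M) ^ q = ∏ _l : Fin q, (N - 2 * M) := by simp
    _ ≤ _ := Finset.prod_le_prod' fun l _ => by
      have := hn l
      rw [Int.card_Icc]; omega

/-! ### Second moments of the sample autocovariances -/

section Moments

variable [MeasurableSpace Ω] {P : Measure Ω} [IsProbabilityMeasure P] {q : ℕ}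
  {ξ : (Fin q → ℤ) → Ω → ℝ}

theorem memLp_two_of_pow_four {X : Ω → ℝ} (hX : Measurable X)
    (h4 : Integrable (fun ω => X ω ^ 4) P) : MemLp X 2 P := by
  rw [memLp_two_iff_integrable_sq hX.aestronglyMeasurable]
  refine (h4.add (integrable_const 1)).mono' (hX.pow_const 2).aestronglyMeasurable
    (Eventually.of_forall fun ω => ?_)
  rw [Real.norm_eq_abs, abs_of_nonneg (sq_nonneg _)]
  simp only [Pi.add_apply]
  nlinarith [sq_nonneg (X ω ^ 2 - 1), sq_nonneg (X ω)]

omit [IsProbabilityMeasure P] in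
theorem identDistrib_site (hmeas : ∀ i, Measurable (ξ i)) (hstat : StrictStationary ξ P)
    (i : Fin q → ℤ) : ProbabilityTheory.IdentDistrib (ξ i) (ξ 0) P P :=
  identDistrib_pairField (G := fun x _ => x) (j := 0) hmeas hstat measurable_fst i

omit [IsProbabilityMeasure P] in
/-- By `2(xy)² ≤ x⁴ + y⁴`, the lagged products are square integrable, uniformly in the lag. -/
theorem memLp_lagProduct (hmeas : ∀ i, Measurable (ξ i)) (hstat : StrictStationary ξ P)
    (h4 : Integrable (fun ω => ξ 0 ω ^ 4) P) (j : Fin q → ℤ) :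
    MemLp (pairField (fun x y => x * y) ξ j 0) 2 P ∧
      ∫ ω, pairField (fun x y => x * y) ξ j 0 ω ^ 2 ∂P ≤ ∫ ω, ξ 0 ω ^ 4 ∂P := by
  have hm := measurable_pairField (j := j) hmeas (G := fun x y => x * y) measurable_mul 0
  have hid := (identDistrib_site hmeas hstat (0 + j)).comp (measurable_id.pow_const 4)
  have hj4 : Integrable (fun ω => ξ (0 + j) ω ^ 4) P := hid.integrable_iff.2 h4
  have hje : ∫ ω, ξ (0 + j) ω ^ 4 ∂P = ∫ ω, ξ 0 ω ^ 4 ∂P := hid.integral_eq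
  have hb : ∀ ω, pairField (fun x y => x * y) ξ j 0 ω ^ 2 ≤
      2⁻¹ * ξ 0 ω ^ 4 + 2⁻¹ * ξ (0 + j) ω ^ 4 := fun ω => by
    simp only [pairField]
    nlinarith [sq_nonneg (ξ 0 ω ^ 2 - ξ (0 + j) ω ^ 2)]
  have hdom := (h4.const_mul 2⁻¹).add (hj4.const_mul 2⁻¹)
  have hint : Integrable (fun ω => pairField (fun x y => x * y) ξ j 0 ω ^ 2) P :=
    hdom.mono' (hm.pow_const 2).aestronglyMeasurable (Eventually.of_forall fun ω => by
      rw [Real.norm_eq_abs, abs_of_nonneg (sq_nonneg _)]; exact hb ω)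
  refine ⟨(memLp_two_iff_integrable_sq hm.aestronglyMeasurable).2 hint, ?_⟩
  have h := integral_mono hint hdom hb
  simp only [Pi.add_apply] at h
  rw [integral_add (h4.const_mul 2⁻¹) (hj4.const_mul 2⁻¹), integral_const_mul, integral_const_mul,
    hje] at h
  linarith

omit [IsProbabilityMeasure P] in
/-- The mixing rate sums over `ℤ^q` to `O(M^q)`, which is the only form in which the summability
hypothesis enters. -/
theorem exists_sum_sqrt_phiMix_le [Nonempty (Fin q)]
    (hphisum : Summable (fun r : ℕ => (r : ℝ) ^ (q - 1) * Real.sqrt (phiMix ξ P (r : ℤ)))) :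
    ∃ K : ℝ, 0 ≤ K ∧ ∀ M : ℕ, 1 ≤ M → ∀ F : Finset (Fin q → ℤ),
      ∑ k ∈ F, Real.sqrt (phiMix ξ P ((siteNorm k : ℤ) - M)) ≤ K * (M : ℝ) ^ q := by
  have hq : 1 ≤ q := by
    have := Fin.pos_iff_nonempty.2 ‹Nonempty (Fin q)›
    omega
  refine sum_gap_le hq (fun r => Real.sqrt (phiMix ξ P r)) (fun r => Real.sqrt_nonneg _)
    (fun r hr => ?_) hphisum
  simp [phiMix, hr]

/-- Absolute summability of the autocovariances, from the covariance inequality for `ξ` itself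
(`G(x,y) = x`, `j = 0`). -/
theorem summable_acov1 [Nonempty (Fin q)] (hmeas : ∀ i, Measurable (ξ i))
    (hstat : StrictStationary ξ P) (hmean : ∫ ω, ξ 0 ω ∂P = 0)
    (h4 : Integrable (fun ω => ξ 0 ω ^ 4) P)
    (hphisum : Summable (fun r : ℕ => (r : ℝ) ^ (q - 1) * Real.sqrt (phiMix ξ P (r : ℤ)))) :
    Summable (fun j => |acov1 ξ P j|) := by
  obtain ⟨K, -, hK⟩ := exists_sum_sqrt_phiMix_le hphisum
  have hV : 0 ≤ ∫ ω, ξ 0 ω ^ 2 ∂P := integral_nonneg fun _ => sq_nonneg _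
  refine summable_of_sum_le (c := 2 * (∫ ω, ξ 0 ω ^ 2 ∂P) * (K * ((1 : ℕ) : ℝ) ^ q))
    (fun _ => abs_nonneg _) fun F => ?_
  refine le_trans (Finset.sum_le_sum fun k _ => ?_)
    ((Finset.mul_sum F _ _).symm.le.trans
      (mul_le_mul_of_nonneg_left (hK 1 le_rfl F) (by positivity)))
  have := pairField_cov_le (G := fun x _ => x) (j := 0) (M := 1) hmeas hstat measurable_fst
    (memLp_two_of_pow_four (hmeas 0) h4) (by simp [siteNorm]) k
  simp only [pairField, hmean] at this
  rw [zero_pow two_ne_zero, sub_zero] at this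
  exact this.trans (le_of_eq (by ring))

/-- The sum over `B` of the lag-`j` products has variance `O(|B| M^q)` as soon as `‖j‖ ≤ M`. -/
theorem variance_sum_lagProduct_le [Nonempty (Fin q)] (hmeas : ∀ i, Measurable (ξ i))
    (hstat : StrictStationary ξ P) (h4 : Integrable (fun ω => ξ 0 ω ^ 4) P)
    {K : ℝ} {M : ℕ} (hK : ∀ F : Finset (Fin q → ℤ),
      ∑ k ∈ F, Real.sqrt (phiMix ξ P ((siteNorm k : ℤ) - M)) ≤ K * (M : ℝ) ^ q)
    {j : Fin q → ℤ} (hj : siteNorm j ≤ M) (B : Finset (Fin q → ℤ)) :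
    ∫ ω, (∑ i ∈ B, (ξ i ω * ξ (i + j) ω - acov1 ξ P j)) ^ 2 ∂P ≤
      B.card * (2 * (∫ ω, ξ 0 ω ^ 4 ∂P) * (K * (M : ℝ) ^ q)) := by
  obtain ⟨hL2, hV⟩ := memLp_lagProduct hmeas hstat h4 j
  have hG : Measurable (Function.uncurry fun x y : ℝ => x * y) := measurable_mul
  set Y := pairField (fun x y => x * y) ξ j with hY
  have hid := fun i => identDistrib_pairField (j := j) hmeas hstat hG i
  have hYL : ∀ i, MemLp (Y i) 2 P := fun i => (hid i).memLp_iff.2 hL2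
  have hY0 : ∫ ω, Y 0 ω ∂P = acov1 ξ P j := by simp [hY, pairField, acov1]
  have hYi : ∀ i, ∫ ω, Y i ω ∂P = acov1 ξ P j := fun i => (hid i).integral_eq.trans hY0
  have hZL : ∀ i, MemLp (fun ω => Y i ω - acov1 ξ P j) 2 P := fun i =>
    (hYL i).sub (memLp_const _)
  have hcov : ∀ i i', ∫ ω, (Y i ω - acov1 ξ P j) * (Y i' ω - acov1 ξ P j) ∂P ≤
      2 * (∫ ω, ξ 0 ω ^ 4 ∂P) * Real.sqrt (phiMix ξ P ((siteNorm (i' - i) : ℤ) - M)) := by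
    intro i i'
    have e : ∫ ω, (Y i ω - acov1 ξ P j) * (Y i' ω - acov1 ξ P j) ∂P =
        ∫ ω, Y 0 ω * Y (i' - i) ω ∂P - (∫ ω, Y 0 ω ∂P) ^ 2 := by
      have h1 := integral_pairField_mul (j := j) hmeas hstat hG 0 (i' - i) i
      rw [zero_add, sub_add_cancel] at h1
      rw [← h1, hY0]
      have h2 : ∀ ω, (Y i ω - acov1 ξ P j) * (Y i' ω - acov1 ξ P j) =
          Y i ω * Y i' ω - (acov1 ξ P j * Y i ω + acov1 ξ P j * Y i' ω - acov1 ξ P j ^ 2) :=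
        fun ω => by ring
      have i1 := ((hYL i).integrable one_le_two).const_mul (acov1 ξ P j)
      have i2 := ((hYL i').integrable one_le_two).const_mul (acov1 ξ P j)
      have i3 : Integrable (fun ω => Y i ω * Y i' ω) P := (hYL i).integrable_mul (hYL i')
      have i12 : Integrable (fun ω => acov1 ξ P j * Y i ω + acov1 ξ P j * Y i' ω) P := i1.add i2
      have i123 : Integrable (fun ω =>
          acov1 ξ P j * Y i ω + acov1 ξ P j * Y i' ω - acov1 ξ P j ^ 2) P :=
        i12.sub (integrable_const _)
      simp_rw [h2]
      rw [integral_sub i3 i123, integral_sub i12 (integrable_const _), integral_add i1 i2,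
        integral_const_mul, integral_const_mul, hYi, hYi]
      simp only [integral_const, probReal_univ, smul_eq_mul]
      ring
    rw [e]
    refine (le_abs_self _).trans ((pairField_cov_le hmeas hstat hG hL2 hj (i' - i)).trans ?_)
    nlinarith [mul_le_mul_of_nonneg_left hV
      (Real.sqrt_nonneg (phiMix ξ P ((siteNorm (i' - i) : ℤ) - M)))]
  have hsq : ∀ ω, (∑ i ∈ B, (ξ i ω * ξ (i + j) ω - acov1 ξ P j)) ^ 2 =
      ∑ i ∈ B, ∑ i' ∈ B, (Y i ω - acov1 ξ P j) * (Y i' ω - acov1 ξ P j) := fun ω => by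
    rw [sq, Finset.sum_mul_sum]; rfl
  have hint : ∀ i i', Integrable (fun ω => (Y i ω - acov1 ξ P j) * (Y i' ω - acov1 ξ P j)) P :=
    fun i i' => (hZL i).integrable_mul (hZL i')
  have hV0 : 0 ≤ ∫ ω, ξ 0 ω ^ 4 ∂P := integral_nonneg fun _ => by positivity
  simp_rw [hsq]
  rw [integral_finsetSum _ fun i _ => integrable_finsetSum _ fun i' _ => hint i i',
    ← nsmul_eq_mul]
  refine Finset.sum_le_card_nsmul _ _ _ fun i _ => ?_
  rw [integral_finsetSum _ fun i' _ => hint i i']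
  refine (Finset.sum_le_sum fun i' _ => hcov i i').trans ?_
  rw [← Finset.mul_sum]
  refine mul_le_mul_of_nonneg_left ?_ (by positivity)
  have := hK (B.image fun i' => i' - i)
  rwa [Finset.sum_image fun x _ y _ h => sub_left_injective h] at this

omit [IsProbabilityMeasure P] in
theorem memLp_acovHat1 (hmeas : ∀ i, Measurable (ξ i))
    (hstat : StrictStationary ξ P) (h4 : Integrable (fun ω => ξ 0 ω ^ 4) P)
    (n : Fin q → ℕ) (j : Fin q → ℤ) : MemLp (acovHat1 ξ n j) 2 P :=
  (memLp_finsetSum _ fun i _ => (identDistrib_pairField (j := j) hmeas hstat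
    (G := fun x y => x * y) measurable_mul i).memLp_iff.2
      (memLp_lagProduct hmeas hstat h4 j).1).const_mul _

theorem measurable_acovHat1 (hmeas : ∀ i, Measurable (ξ i)) (n : Fin q → ℕ) (j : Fin q → ℤ) :
    Measurable (acovHat1 ξ n j) :=
  (Finset.measurable_fun_sum _ fun i _ => (hmeas i).mul (hmeas (i + j))).const_mul _

theorem integral_abs_le_sqrt {Z : Ω → ℝ} (hZ : MemLp Z 2 P) :
    ∫ ω, |Z ω| ∂P ≤ Real.sqrt (∫ ω, Z ω ^ 2 ∂P) := by
  refine Real.le_sqrt_of_sq_le ?_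
  have h := ProbabilityTheory.variance_nonneg (fun ω => |Z ω|) P
  have hZ' : MemLp (fun ω => |Z ω|) 2 P := hZ.abs
  rw [ProbabilityTheory.variance_eq_sub hZ'] at h
  simp only [Pi.pow_apply, sq_abs] at h
  linarith

/-- The `L¹` error of a sample autocovariance is `O((M^q / |B|)^{1/2})`, where `B` is the set of
averaged sites, uniformly over lags `‖j‖ ≤ M`. -/
theorem integral_abs_acovHat1_sub_le [Nonempty (Fin q)] (hmeas : ∀ i, Measurable (ξ i))
    (hstat : StrictStationary ξ P) (h4 : Integrable (fun ω => ξ 0 ω ^ 4) P)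
    {K : ℝ} {M : ℕ} (hK : ∀ F : Finset (Fin q → ℤ),
      ∑ k ∈ F, Real.sqrt (phiMix ξ P ((siteNorm k : ℤ) - M)) ≤ K * (M : ℝ) ^ q)
    {j : Fin q → ℤ} (hj : siteNorm j ≤ M) {n : Fin q → ℕ} (hn : 0 < (boxJ q n j).card) :
    ∫ ω, |acovHat1 ξ n j ω - acov1 ξ P j| ∂P ≤
      Real.sqrt (2 * (∫ ω, ξ 0 ω ^ 4 ∂P) * (K * (M : ℝ) ^ q) / (boxJ q n j).card) := by
  refine (integral_abs_le_sqrt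
    ((memLp_acovHat1 hmeas hstat h4 n j).sub (memLp_const _))).trans (Real.sqrt_le_sqrt ?_)
  have hN : (0 : ℝ) < (boxJ q n j).card := by exact_mod_cast hn
  have e : ∀ ω, (acovHat1 ξ n j ω - acov1 ξ P j) ^ 2 = (((boxJ q n j).card : ℝ)⁻¹) ^ 2 *
      (∑ i ∈ boxJ q n j, (ξ i ω * ξ (i + j) ω - acov1 ξ P j)) ^ 2 := fun ω => by
    rw [Finset.sum_sub_distrib, Finset.sum_const, nsmul_eq_mul, acovHat1]
    field_simp
  simp only [Pi.sub_apply]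
  simp_rw [e]
  rw [integral_const_mul]
  refine (mul_le_mul_of_nonneg_left
    (variance_sum_lagProduct_le hmeas hstat h4 hK hj (boxJ q n j)) (by positivity)).trans
    (le_of_eq ?_)
  field_simp

end Moments

/-! ### Growing lag windows -/

section Consistency

variable [MeasurableSpace Ω] {P : Measure Ω} [IsProbabilityMeasure P] {q : ℕ}
  {ξ : (Fin q → ℤ) → Ω → ℝ}

/-- Window sizes eventually satisfy `1 ≤ m*` and `4 m* ≤ n_*`. -/
theorem eventually_window [Nonempty (Fin q)] {mseq : (Fin q → ℕ) → (Fin q → ℕ)}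
    (hm1 : Tendsto mseq atTop atTop)
    (hm2 : Tendsto (fun n : Fin q → ℕ =>
      ((⨆ i, mseq n i : ℕ) : ℝ) ^ 3 / ((⨅ i, n i : ℕ) : ℝ)) atTop (𝓝 0)) :
    ∀ᶠ n : Fin q → ℕ in atTop,
      1 ≤ (⨆ i, mseq n i) ∧ 4 * (⨆ i, mseq n i) ≤ ⨅ i, n i := by
  filter_upwards [hm1.eventually_ge_atTop 1, eventually_ge_atTop (1 : Fin q → ℕ),
    hm2.eventually_lt_const (show (0 : ℝ) < 1 / 4 by norm_num)] with n h1 h2 h3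
  have hM : 1 ≤ ⨆ i, mseq n i :=
    (h1 (Classical.arbitrary _)).trans (le_ciSup (Set.finite_range _).bddAbove _)
  have hN : 1 ≤ ⨅ i, n i := le_ciInf h2
  refine ⟨hM, ?_⟩
  set M := ⨆ i, mseq n i
  set N := ⨅ i, n i
  have hN' : (1 : ℝ) ≤ N := by exact_mod_cast hN
  have hM' : (1 : ℝ) ≤ M := by exact_mod_cast hM
  rw [div_lt_iff₀ (by linarith)] at h3
  have h4 : (M : ℝ) ≤ (M : ℝ) ^ 3 := le_self_pow₀ hM' (by norm_num)
  have : (4 * M : ℝ) ≤ N := by linarith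
  exact_mod_cast this

theorem siteNorm_le_of_mem_lags {m : Fin q → ℕ} {j : Fin q → ℤ} (hj : j ∈ lags q m) :
    siteNorm j ≤ ⨆ i, m i := by
  rw [lags, Finset.mem_Icc] at hj
  refine siteNorm_le.2 fun l => ?_
  have h1 := hj.1 l
  have h2 := hj.2 l
  have h3 : m l ≤ ⨆ i, m i := le_ciSup (Set.finite_range _).bddAbove l
  simp only at h1 h2
  omega

/-- The summed `L¹` error of the sample autocovariances over the lag window vanishes: it is of
order `(m*)^q · ((m*)^q / n_*^q)^{1/2} = ((m*)³ / n_*)^{q/2}`. -/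
theorem tendsto_sum_integral_abs_acovHat1_sub [Nonempty (Fin q)] (hmeas : ∀ i, Measurable (ξ i))
    (hstat : StrictStationary ξ P) (h4 : Integrable (fun ω => ξ 0 ω ^ 4) P)
    (hphisum : Summable (fun r : ℕ => (r : ℝ) ^ (q - 1) * Real.sqrt (phiMix ξ P (r : ℤ))))
    {mseq : (Fin q → ℕ) → (Fin q → ℕ)} (hm1 : Tendsto mseq atTop atTop)
    (hm2 : Tendsto (fun n : Fin q → ℕ =>
      ((⨆ i, mseq n i : ℕ) : ℝ) ^ 3 / ((⨅ i, n i : ℕ) : ℝ)) atTop (𝓝 0)) :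
    Tendsto (fun n : Fin q → ℕ => ∑ j ∈ lags q (mseq n),
      ∫ ω, |acovHat1 ξ n j ω - acov1 ξ P j| ∂P) atTop (𝓝 0) := by
  obtain ⟨K, hK0, hK⟩ := exists_sum_sqrt_phiMix_le hphisum
  have hq : q ≠ 0 := (Fin.pos_iff_nonempty.2 ‹Nonempty (Fin q)›).ne'
  set V := ∫ ω, ξ 0 ω ^ 4 ∂P
  have hV0 : 0 ≤ V := integral_nonneg fun _ => by positivity
  have hlim : Tendsto (fun n : Fin q → ℕ => 3 ^ q * Real.sqrt (2 * V * K * 2 ^ q *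
      (((⨆ i, mseq n i : ℕ) : ℝ) ^ 3 / ((⨅ i, n i : ℕ) : ℝ)) ^ q)) atTop (𝓝 0) := by
    have := (((hm2.pow q).const_mul (2 * V * K * 2 ^ q)).sqrt).const_mul (3 ^ q)
    simpa [zero_pow hq] using this
  refine squeeze_zero' (Eventually.of_forall fun n => Finset.sum_nonneg fun j _ =>
    integral_nonneg fun _ => abs_nonneg _) ?_ hlim
  filter_upwards [eventually_window hm1 hm2] with n hn
  set M := ⨆ i, mseq n i
  set N := ⨅ i, n i
  obtain ⟨hM, hMN⟩ := hn
  have hM' : (1 : ℝ) ≤ M := by exact_mod_cast hM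
  have hMN' : 4 * (M : ℝ) ≤ N := by exact_mod_cast hMN
  have hN : (0 : ℝ) < N := by linarith
  have hcard : ∀ j ∈ lags q (mseq n), ((N : ℝ) / 2) ^ q ≤ (boxJ q n j).card := fun j hj => by
    have h := pow_le_card_boxJ (N := N) (siteNorm_le_of_mem_lags hj)
      (fun l => ciInf_le (OrderBot.bddBelow _) l)
    have h' : (((N - 2 * M : ℕ) : ℝ)) ^ q ≤ (boxJ q n j).card := by exact_mod_cast h
    refine le_trans (pow_le_pow_left₀ (by positivity) ?_ q) h'
    rw [Nat.cast_sub (by omega)]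
    push_cast
    linarith
  have hterm : ∀ j ∈ lags q (mseq n), ∫ ω, |acovHat1 ξ n j ω - acov1 ξ P j| ∂P ≤
      Real.sqrt (2 * V * (K * (M : ℝ) ^ q) / ((N : ℝ) / 2) ^ q) := fun j hj => by
    have hc := hcard j hj
    have hc0 : (0 : ℝ) < ((N : ℝ) / 2) ^ q := by positivity
    refine (integral_abs_acovHat1_sub_le hmeas hstat h4 (hK M hM) (siteNorm_le_of_mem_lags hj)
      (by exact_mod_cast hc0.trans_le hc)).trans (Real.sqrt_le_sqrt ?_)
    exact div_le_div_of_nonneg_left (by positivity) hc0 hc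
  have hlc : ((lags q (mseq n)).card : ℝ) ≤ 3 ^ q * (M : ℝ) ^ q := by
    calc ((lags q (mseq n)).card : ℝ) ≤ ((lags q (fun _ => M)).card : ℝ) := by
          exact_mod_cast Finset.card_le_card fun j hj =>
            mem_lags_const.2 (siteNorm_le_of_mem_lags hj)
      _ = (2 * M + 1) ^ q := by rw [card_lags_const]; push_cast; rfl
      _ ≤ (3 * M) ^ q := pow_le_pow_left₀ (by positivity) (by linarith) _
      _ = _ := mul_pow _ _ _
  calc ∑ j ∈ lags q (mseq n), ∫ ω, |acovHat1 ξ n j ω - acov1 ξ P j| ∂P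
      ≤ (lags q (mseq n)).card • Real.sqrt (2 * V * (K * (M : ℝ) ^ q) / ((N : ℝ) / 2) ^ q) :=
        Finset.sum_le_card_nsmul _ _ _ hterm
    _ ≤ 3 ^ q * (M : ℝ) ^ q * Real.sqrt (2 * V * (K * (M : ℝ) ^ q) / ((N : ℝ) / 2) ^ q) := by
        rw [nsmul_eq_mul]
        exact mul_le_mul_of_nonneg_right hlc (Real.sqrt_nonneg _)
    _ = 3 ^ q * Real.sqrt (2 * V * K * 2 ^ q * ((M : ℝ) ^ 3 / (N : ℝ)) ^ q) := by
        rw [mul_assoc]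
        congr 1
        rw [← Real.sqrt_sq (show (0 : ℝ) ≤ (M : ℝ) ^ q by positivity), ← Real.sqrt_mul
          (by positivity), Real.sqrt_sq (by positivity)]
        congr 1
        rw [div_pow, div_pow]
        field_simp
        ring

/-- The lag windows exhaust `ℤ^q`. -/
theorem tendsto_lags_atTop {mseq : (Fin q → ℕ) → (Fin q → ℕ)} (hm1 : Tendsto mseq atTop atTop) :
    Tendsto (fun n => lags q (mseq n)) atTop atTop := by
  have : Tendsto (fun m : Fin q → ℕ => lags q m) atTop atTop := by
    refine tendsto_atTop_finset_of_monotone (fun m m' hmm => ?_) fun j =>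
      ⟨fun l => (j l).natAbs, ?_⟩
    · refine Finset.Icc_subset_Icc (fun l => ?_) fun l => ?_
      · have h : m l ≤ m' l := hmm l
        simp only
        omega
      · have h : m l ≤ m' l := hmm l
        simp only
        omega
    · rw [lags, Finset.mem_Icc]
      constructor <;> intro l <;> simp only <;> omega
  exact this.comp hm1

end Consistency

/-! ### Consistency of the cut-off estimator -/

/-- Corollary: weak consistency of the hard-thresholding (cut-off)
estimator, univariate. -/
theorem sigmaHat_cutoff_consistent
    {q : ℕ} [Nonempty (Fin q)]
    [MeasurableSpace Ω] (P : Measure Ω) [IsProbabilityMeasure P]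
    (ξ : (Fin q → ℤ) → Ω → ℝ)
    (hmeas : ∀ i, Measurable (ξ i))
    (hstat : StrictStationary ξ P)
    (hmix : Tendsto (fun r : ℕ => phiMix ξ P (r : ℤ)) atTop (𝓝 0))
    (hmean : ∫ ω, ξ 0 ω ∂P = 0)
    (hmom : Integrable (fun ω => (ξ 0 ω) ^ 4) P)
    (hphisum : Summable (fun r : ℕ => (r : ℝ) ^ (q - 1) * Real.sqrt (phiMix ξ P (r : ℤ))))
    (w : (Fin q → ℕ) → (Fin q → ℤ) → ℝ)
    (hW1 : ∀ j : Fin q → ℤ, Tendsto (fun m : Fin q → ℕ => w m j) atTop (𝓝 1))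
    (hW2 : ∃ C : ℝ, ∀ m j, |w m j| ≤ C)
    (mseq : (Fin q → ℕ) → (Fin q → ℕ))
    (hm1 : Tendsto mseq atTop atTop)
    (hm2 : Tendsto (fun n : Fin q → ℕ =>
      ((⨆ i, mseq n i : ℕ) : ℝ) ^ 3 / ((⨅ i, n i : ℕ) : ℝ)) atTop (𝓝 0))
    -- thresholds
    (c : (Fin q → ℕ) → (Fin q → ℤ) → ℝ)
    (hcnonneg : ∀ n j, 0 ≤ c n j)
    (climit : (Fin q → ℤ) → ℝ)
    (hc : ∀ j : Fin q → ℤ, Tendsto (fun n : Fin q → ℕ => c n j) atTop (𝓝 (climit j)))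
    (hclt : ∀ j : Fin q → ℤ, climit j < |acov1 ξ P j|) :
    ∀ ε : ℝ, 0 < ε →
      Tendsto (fun n : Fin q → ℕ =>
        P {ω | ε < |(∑ j ∈ lags q (mseq n),
          w (mseq n) j * acovHat1 ξ n j ω *
            (if c n j < |acovHat1 ξ n j ω| then (1 : ℝ) else 0)) -
              (∑' j : Fin q → ℤ, acov1 ξ P j)|})
        atTop (𝓝 0) := by
  classical
  obtain ⟨C, hC⟩ := hW2
  have hC0 : 0 ≤ C := (abs_nonneg _).trans (hC 0 0)
  set γ := acov1 ξ P with hγ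
  have hsum : Summable fun j => |γ j| := summable_acov1 hmeas hstat hmean hmom hphisum
  -- `I n j` is the indicator that lag `j` survives thresholding
  set I : (Fin q → ℕ) → (Fin q → ℤ) → Ω → ℝ := fun n j ω =>
    if c n j < |acovHat1 ξ n j ω| then (1 : ℝ) else 0 with hI
  have hI01 : ∀ n j ω, 0 ≤ I n j ω ∧ I n j ω ≤ 1 := fun n j ω => by
    simp only [hI]; split_ifs <;> norm_num
  have hIm : ∀ n j, Measurable (I n j) := fun n j =>
    Measurable.ite (measurableSet_lt measurable_const (measurable_acovHat1 hmeas n j).abs)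
      measurable_const measurable_const
  set δ : (Fin q → ℕ) → (Fin q → ℤ) → ℝ := fun n j => ∫ ω, |acovHat1 ξ n j ω - γ j| ∂P with hδ
  have hδ0 : ∀ n j, 0 ≤ δ n j := fun n j => integral_nonneg fun _ => abs_nonneg _
  have hδsum : Tendsto (fun n => ∑ j ∈ lags q (mseq n), δ n j) atTop (𝓝 0) :=
    tendsto_sum_integral_abs_acovHat1_sub hmeas hstat hmom hphisum hm1 hm2
  have hdevint : ∀ n j, Integrable (fun ω => |acovHat1 ξ n j ω - γ j|) P := fun n j =>
    (((memLp_acovHat1 hmeas hstat hmom n j).integrable one_le_two).sub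
      (integrable_const _)).abs
  have hlags := tendsto_lags_atTop hm1
  have hmem : ∀ j : Fin q → ℤ, ∀ᶠ n in atTop, j ∈ lags q (mseq n) := fun j => by
    filter_upwards [hlags.eventually_ge_atTop {j}] with n hn
    exact hn (Finset.mem_singleton_self j)
  have hδj : ∀ j, Tendsto (fun n => δ n j) atTop (𝓝 0) := fun j => by
    refine squeeze_zero' (Eventually.of_forall fun n => hδ0 n j) ?_ hδsum
    filter_upwards [hmem j] with n hn
    exact Finset.single_le_sum (f := fun j => δ n j) (fun j _ => hδ0 n j) hn
  -- `b n j` is the mean error of the thresholded weight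
  set b : (Fin q → ℕ) → (Fin q → ℤ) → ℝ := fun n j =>
    ∫ ω, |w (mseq n) j * I n j ω - 1| ∂P with hb
  have hbpt : ∀ n j ω, |w (mseq n) j * I n j ω - 1| ≤ C + 1 := fun n j ω => by
    have h1 := hC (mseq n) j
    have h2 := hI01 n j ω
    calc |w (mseq n) j * I n j ω - 1| ≤ |w (mseq n) j * I n j ω| + |1| := abs_sub _ _
      _ ≤ C + 1 := by
        rw [abs_mul, abs_of_nonneg h2.1, abs_one]
        nlinarith [abs_nonneg (w (mseq n) j)]
  have hbint : ∀ n j, Integrable (fun ω => |w (mseq n) j * I n j ω - 1|) P := fun n j =>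
    (integrable_const (C + 1)).mono'
      ((((hIm n j).const_mul _).sub_const 1).abs).aestronglyMeasurable
      (Eventually.of_forall fun ω => by
        rw [Real.norm_eq_abs, abs_abs]; exact hbpt n j ω)
  have hb0 : ∀ n j, 0 ≤ b n j := fun n j => integral_nonneg fun _ => abs_nonneg _
  have hb1 : ∀ n j, b n j ≤ C + 1 := fun n j => by
    have := integral_mono (hbint n j) (integrable_const (C + 1)) (hbpt n j)
    simpa using this
  have hbj : ∀ j, Tendsto (fun n => b n j) atTop (𝓝 0) := fun j => by
    have hgap : Tendsto (fun n => |γ j| - c n j) atTop (𝓝 (|γ j| - climit j)) :=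
      tendsto_const_nhds.sub (hc j)
    have hgap0 : 0 < |γ j| - climit j := sub_pos.2 (hclt j)
    have hw : Tendsto (fun n => |w (mseq n) j - 1|) atTop (𝓝 0) := by
      have := (((hW1 j).comp hm1).sub_const 1).abs
      simpa using this
    have hlim : Tendsto (fun n => |w (mseq n) j - 1| + C / (|γ j| - c n j) * δ n j) atTop
        (𝓝 0) := by
      have := hw.add ((tendsto_const_nhds (x := C).div hgap hgap0.ne').mul (hδj j))
      simpa using this
    refine squeeze_zero' (Eventually.of_forall fun n => hb0 n j) ?_ hlim
    filter_upwards [hgap.eventually_const_lt hgap0] with n hn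
    -- dropping lag `j` costs a deviation of at least `|γ j| - c n j > 0`
    have hpt : ∀ ω, |w (mseq n) j * I n j ω - 1| ≤
        |w (mseq n) j - 1| + C / (|γ j| - c n j) * |acovHat1 ξ n j ω - γ j| := fun ω => by
      by_cases h : c n j < |acovHat1 ξ n j ω|
      · have : I n j ω = 1 := if_pos h
        rw [this, mul_one]
        have : 0 ≤ C / (|γ j| - c n j) * |acovHat1 ξ n j ω - γ j| := by positivity
        linarith
      · have h0 : I n j ω = 0 := if_neg h
        rw [h0, mul_zero, zero_sub, abs_neg, abs_one]
        have h1 : |γ j| - c n j ≤ |acovHat1 ξ n j ω - γ j| := by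
          have := abs_sub_abs_le_abs_sub (γ j) (acovHat1 ξ n j ω)
          rw [abs_sub_comm (γ j)] at this
          linarith [not_lt.1 h]
        have h2 : C ≤ C / (|γ j| - c n j) * |acovHat1 ξ n j ω - γ j| := by
          rw [div_mul_eq_mul_div, le_div_iff₀ hn]
          exact mul_le_mul_of_nonneg_left h1 hC0
        have h3 : 1 ≤ |w (mseq n) j - 1| + |w (mseq n) j| := by
          have := abs_sub (w (mseq n) j) (w (mseq n) j - 1)
          rw [sub_sub_cancel, abs_one] at this
          linarith
        linarith [hC (mseq n) j]
    have := integral_mono (hbint n j) ((integrable_const _).add ((hdevint n j).const_mul _)) hpt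
    simp only [Pi.add_apply] at this
    rw [integral_add (integrable_const _) ((hdevint n j).const_mul _), integral_const_mul] at this
    simpa using this
  have hbsum : Tendsto (fun n => ∑ j ∈ lags q (mseq n), |γ j| * b n j) atTop (𝓝 0) := by
    have h := tendsto_tsum_of_dominated_convergence (𝓕 := atTop)
      (f := fun (n : Fin q → ℕ) j => if j ∈ lags q (mseq n) then |γ j| * b n j else 0)
      (g := fun _ => (0 : ℝ)) (bound := fun j => |γ j| * (C + 1)) (hsum.mul_right _)
      (fun j => by
        have := (hbj j).const_mul |γ j|
        rw [mul_zero] at this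
        refine this.congr' ?_
        filter_upwards [hmem j] with n hn
        rw [if_pos hn])
      (Eventually.of_forall fun n j => by
        split_ifs
        · rw [Real.norm_eq_abs, abs_of_nonneg (mul_nonneg (abs_nonneg _) (hb0 n j))]
          exact mul_le_mul_of_nonneg_left (hb1 n j) (abs_nonneg _)
        · rw [norm_zero]; positivity)
    rw [tsum_zero] at h
    refine h.congr fun n => ?_
    rw [tsum_eq_sum (s := lags q (mseq n)) fun j hj => if_neg hj]
    exact Finset.sum_congr rfl fun j hj => if_pos hj
  have htail : Tendsto (fun n => |∑ j ∈ lags q (mseq n), γ j - ∑' j, γ j|) atTop (𝓝 0) := by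
    have h1 : Tendsto (fun n => ∑ j ∈ lags q (mseq n), γ j) atTop (𝓝 (∑' j, γ j)) :=
      hsum.of_abs.hasSum.comp hlags
    have := (h1.sub_const (∑' j, γ j)).abs
    simpa using this
  -- pointwise error decomposition and Markov's inequality
  intro ε hε
  set T : (Fin q → ℕ) → Ω → ℝ := fun n ω =>
    ∑ j ∈ lags q (mseq n), w (mseq n) j * acovHat1 ξ n j ω * I n j ω with hT
  set R : (Fin q → ℕ) → Ω → ℝ := fun n ω =>
    C * ∑ j ∈ lags q (mseq n), |acovHat1 ξ n j ω - γ j| +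
      ∑ j ∈ lags q (mseq n), |γ j| * |w (mseq n) j * I n j ω - 1| +
      |∑ j ∈ lags q (mseq n), γ j - ∑' j, γ j| with hR
  have hTR : ∀ n ω, |T n ω - ∑' j, γ j| ≤ R n ω := fun n ω => by
    have e : T n ω - ∑' j, γ j =
        ∑ j ∈ lags q (mseq n), w (mseq n) j * I n j ω * (acovHat1 ξ n j ω - γ j) +
        ∑ j ∈ lags q (mseq n), γ j * (w (mseq n) j * I n j ω - 1) +
        (∑ j ∈ lags q (mseq n), γ j - ∑' j, γ j) := by
      rw [hT, ← add_sub_assoc, ← Finset.sum_add_distrib, ← Finset.sum_add_distrib]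
      congr 1
      exact Finset.sum_congr rfl fun j _ => by ring
    rw [e]
    refine (abs_add_three _ _ _).trans ?_
    simp only [hR]
    gcongr
    · rw [Finset.mul_sum]
      refine (Finset.abs_sum_le_sum_abs _ _).trans (Finset.sum_le_sum fun j _ => ?_)
      rw [abs_mul, abs_mul, abs_of_nonneg (hI01 n j ω).1]
      refine mul_le_mul_of_nonneg_right ?_ (abs_nonneg _)
      nlinarith [hC (mseq n) j, abs_nonneg (w (mseq n) j), hI01 n j ω]
    · refine (Finset.abs_sum_le_sum_abs _ _).trans (Finset.sum_le_sum fun j _ => ?_)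
      rw [abs_mul]
  have hi1 : ∀ n, Integrable (fun ω => C * ∑ j ∈ lags q (mseq n), |acovHat1 ξ n j ω - γ j|) P :=
    fun n => (integrable_finsetSum _ fun j _ => hdevint n j).const_mul C
  have hi2 : ∀ n, Integrable (fun ω => ∑ j ∈ lags q (mseq n),
      |γ j| * |w (mseq n) j * I n j ω - 1|) P :=
    fun n => integrable_finsetSum _ fun j _ => (hbint n j).const_mul _
  have hi12 : ∀ n, Integrable (fun ω => C * ∑ j ∈ lags q (mseq n), |acovHat1 ξ n j ω - γ j| +
      ∑ j ∈ lags q (mseq n), |γ j| * |w (mseq n) j * I n j ω - 1|) P :=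
    fun n => (hi1 n).add (hi2 n)
  have hRint : ∀ n, Integrable (R n) P := fun n => (hi12 n).add (integrable_const _)
  have hRval : ∀ n, ∫ ω, R n ω ∂P = C * ∑ j ∈ lags q (mseq n), δ n j +
      ∑ j ∈ lags q (mseq n), |γ j| * b n j + |∑ j ∈ lags q (mseq n), γ j - ∑' j, γ j| := fun n => by
    simp only [hR]
    rw [integral_add (hi12 n) (integrable_const _), integral_add (hi1 n) (hi2 n),
      integral_const_mul, integral_finsetSum _ fun j _ => hdevint n j,
      integral_finsetSum _ fun j _ => (hbint n j).const_mul _]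
    simp only [integral_const_mul, integral_const, probReal_univ, one_smul, hδ, hb]
  have hRlim : Tendsto (fun n => ∫ ω, R n ω ∂P) atTop (𝓝 0) := by
    have := ((hδsum.const_mul C).add hbsum).add htail
    simp only [mul_zero, add_zero] at this
    exact this.congr fun n => (hRval n).symm
  have hprob : Tendsto (fun n => P.real {ω | ε < |T n ω - ∑' j, γ j|}) atTop (𝓝 0) := by
    have h := hRlim.div_const ε
    rw [zero_div] at h
    refine squeeze_zero (fun _ => measureReal_nonneg) (fun n => ?_) h
    rw [le_div_iff₀ hε, mul_comm]
    refine le_trans (mul_le_mul_of_nonneg_left (measureReal_mono fun ω hω => ?_) hε.le)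
      (mul_meas_ge_le_integral_of_nonneg (Eventually.of_forall fun ω =>
        (abs_nonneg _).trans (hTR n ω)) (hRint n) ε)
    exact (le_of_lt hω).trans (hTR n ω)
  exact (ENNReal.tendsto_toReal_zero_iff fun n => measure_ne_top P _).1 hprob

end
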